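/- Let D be a finite oriented graph with vertex set {1, …, a}, let k and ℓ be positive integers, fix ε with 0 < ε < 1/(4ℓ), and set p = n^{ε−1}. Then, as n → ∞, the probability that a random oriented graph D̂ drawn from 𝒟(n, p) has the following property tends to 1: for every arc vi_0 ∈ A(D) and all nonempty sets 𝒜 ⊆ V_v and ℬ ⊆ V_{i_0} with |𝒜| = n − |ℬ|(k − 1) and |ℬ| ≤ n/k, the number of arcs of D̂ from 𝒜 to ℬ is strictly greater than min{|ℬ|, n^{εℓ}}. -/

import Mathlib

open MeasureTheory

/-- An oriented graph on vertex type `V`: a loopless digraph in which for every pair of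
vertices at most one of the two opposite arcs is present, encoded as an irreflexive,
asymmetric adjacency relation. -/
structure OrientedGraph (V : Type) where
  Adj : V → V → Prop
  irrefl : ∀ v, ¬ Adj v v
  asymm : ∀ u v, Adj u v → ¬ Adj v u

/-- The vertex set `V₁ ∪ ⋯ ∪ V_a` of the blown-up graph `D₀`, where
`V_i = {i} × Fin n` has size `n`. -/
abbrev Vtx (a n : ℕ) : Type := Fin a × Fin n

/-- The part `V_i` of the vertex set of `D₀`. -/
def cellV (a n : ℕ) (i : Fin a) : Set (Vtx a n) := {x | x.1 = i}

/-- A sample point: for each potential arc of `D₀`, whether it is included. -/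
abbrev Omega (a n : ℕ) : Type := Vtx a n × Vtx a n → Bool

/-- The Bernoulli measure on `Bool` with success probability `p`. -/
noncomputable def bernoulliBool (p : ℝ) : Measure Bool :=
  ENNReal.ofReal p • Measure.dirac true + ENNReal.ofReal (1 - p) • Measure.dirac false

/-- The random oriented graph model `𝒟(n, p)`: each potential arc of `D₀` is included
independently with probability `p` (product of Bernoulli measures). -/
noncomputable def model (a n : ℕ) (p : ℝ) : Measure (Omega a n) :=
  Measure.pi fun _ : Vtx a n × Vtx a n => bernoulliBool p

/-- The random spanning subgraph `D̂` of `D₀` determined by the sample point `ω`: the arc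
`x → y` is present iff `x ∈ V_i`, `y ∈ V_j` for an arc `i → j` of `D` and `ω` selects the
pair `(x, y)`. -/
def Dhat {a : ℕ} (D : OrientedGraph (Fin a)) (n : ℕ) (ω : Omega a n) :
    OrientedGraph (Vtx a n) where
  Adj x y := D.Adj x.1 y.1 ∧ ω (x, y) = true
  irrefl x h := D.irrefl x.1 h.1
  asymm x y h h' := D.asymm x.1 y.1 h.1 h'.1

/-- `S` is the arc set of a directed cycle of length `m` in `G`; directed cycles are
counted up to cyclic rotation, and a directed cycle is uniquely determined (up to
rotation) by its arc set. -/
def IsCycleArcSet {V : Type} (G : OrientedGraph V) (m : ℕ) (S : Set (V × V)) : Prop :=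
  ∃ c : ZMod m → V, Function.Injective c ∧ (∀ i, G.Adj (c i) (c (i + 1))) ∧
    S = Set.range fun i => (c i, c (i + 1))

/-- `S` is the arc set of a directed cycle of length less than `ℓ` in `G`. -/
def IsShortCycleArcSet {V : Type} (G : OrientedGraph V) (ℓ : ℕ) (S : Set (V × V)) : Prop :=
  ∃ m : ℕ, 0 < m ∧ m < ℓ ∧ IsCycleArcSet G m S

/-- The number of directed cycles of length less than `ℓ` in `G`, counted up to cyclic
rotation (i.e. the number of their arc sets). -/
noncomputable def numShortCycles {V : Type} (G : OrientedGraph V) (ℓ : ℕ) : ℕ :=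
  Nat.card {S : Set (V × V) // IsShortCycleArcSet G ℓ S}

/-- The vertex `x` lies on the (cycle with) arc set `S`. -/
def OnArcSet {V : Type} (S : Set (V × V)) (x : V) : Prop :=
  ∃ y, (x, y) ∈ S ∨ (y, x) ∈ S

/-! A first-moment argument. Replace `A` by the complement `C` of its copy in the part `V_v`, so
that `|C| = (k - 1)|B|` and `|Cᶜ| ≥ n / k`. By Chernoff, at most `|B|` of the `|Cᶜ||B|` potential
arcs are selected with probability at most `(2 exp (-np / 2k)) ^ |B|`. Since `np` dominates `log n`,
this is eventually at most `n ^ (-(k + 1)|B|) = n ^ (-2|B|) * n ^ (-|C|)`, and the sum of these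
weights over all `C` and all nonempty `B` is at most `(exp (1 / n) - 1) * exp 1`, which tends
to `0`. -/

open ProbabilityTheory Asymptotics
open scoped Finset Topology

section LowerTail

variable {p : ℝ}

lemma isProbabilityMeasure_bernoulliBool (hp : p ∈ Set.Icc 0 1) :
    IsProbabilityMeasure (bernoulliBool p) := by
  refine ⟨?_⟩
  simp [bernoulliBool, ← ENNReal.ofReal_add hp.1 (sub_nonneg.2 hp.2)]

lemma integral_bernoulliBool (hp : p ∈ Set.Icc 0 1) (f : Bool → ℝ) :
    ∫ b, f b ∂bernoulliBool p = p * f true + (1 - p) * f false := by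
  have := isProbabilityMeasure_bernoulliBool hp
  rw [integral_fintype .of_finite]
  simp [bernoulliBool, Measure.real, hp.1, hp.2]

lemma isProbabilityMeasure_model (hp : p ∈ Set.Icc 0 1) (a n : ℕ) :
    IsProbabilityMeasure (model a n p) := by
  have := isProbabilityMeasure_bernoulliBool hp
  unfold model
  infer_instance

lemma mgf_indicator_bernoulliBool (hp : p ∈ Set.Icc 0 1) (t : ℝ) :
    mgf (fun b : Bool => if b = true then (1 : ℝ) else 0) (bernoulliBool p) t =
      1 + p * (Real.exp t - 1) := by
  simp only [mgf, integral_bernoulliBool hp, if_true, Bool.false_eq_true, if_false, mul_one,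
    mul_zero, Real.exp_zero]
  ring

variable {ι : Type*} [Fintype ι]

lemma mgf_card_filter_pi_bernoulliBool (hp : p ∈ Set.Icc 0 1) (S : Finset ι) (t : ℝ) :
    mgf (fun ω : ι → Bool => (#{i ∈ S | ω i = true} : ℝ))
      (Measure.pi fun _ => bernoulliBool p) t = (1 + p * (Real.exp t - 1)) ^ #S := by
  have := isProbabilityMeasure_bernoulliBool hp
  let X : Bool → ℝ := fun b => if b = true then 1 else 0
  have hX : AEMeasurable X (bernoulliBool p) := (measurable_of_finite X).aemeasurable
  have hcoord (i : ι) : mgf (fun ω : ι → Bool => X (ω i)) (Measure.pi fun _ => bernoulliBool p) t =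
      1 + p * (Real.exp t - 1) := by
    have heval := measurePreserving_eval (fun _ : ι => bernoulliBool p) i
    have hmap := mgf_map (X := X) (t := t) heval.aemeasurable .of_discrete
    rw [heval.map_eq] at hmap
    exact hmap.symm.trans (mgf_indicator_bernoulliBool hp t)
  have hsum : (fun ω : ι → Bool => (#{i ∈ S | ω i = true} : ℝ)) =
      ∑ i ∈ S, fun ω : ι → Bool => X (ω i) := by
    ext ω
    simp [X]
  rw [hsum, (iIndepFun_pi fun _ : ι => hX).mgf_sum fun i => measurable_of_finite _]
  simp [hcoord]

lemma measureReal_card_filter_le_exp (hp : p ∈ Set.Icc 0 1) (S : Finset ι) (b : ℝ) {t : ℝ}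
    (ht : t ≤ 0) :
    (Measure.pi fun _ : ι => bernoulliBool p).real {ω | (#{i ∈ S | ω i = true} : ℝ) ≤ b} ≤
      Real.exp (-t * b + #S * (p * (Real.exp t - 1))) := by
  have := isProbabilityMeasure_bernoulliBool hp
  have hbase : 0 ≤ 1 + p * (Real.exp t - 1) := by
    nlinarith [hp.1, hp.2, Real.exp_pos t]
  refine (measure_le_le_exp_mul_mgf b ht .of_finite).trans ?_
  rw [mgf_card_filter_pi_bernoulliBool hp, Real.exp_add, Real.exp_nat_mul, add_comm 1]
  gcongr
  · rwa [add_comm]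
  · exact Real.add_one_le_exp _

end LowerTail

section FirstMoment

lemma sum_pow_card_le_exp (α : Type*) [Fintype α] {x : ℝ} (hx : 0 ≤ x) :
    ∑ s : Finset α, x ^ #s ≤ Real.exp (Fintype.card α * x) := by
  calc ∑ s : Finset α, x ^ #s = (x + 1) ^ Fintype.card α := by
        simpa using Fintype.sum_pow_mul_eq_add_pow α x 1
    _ ≤ Real.exp x ^ Fintype.card α := by
        gcongr
        exact Real.add_one_le_exp x
    _ = Real.exp (Fintype.card α * x) := (Real.exp_nat_mul x _).symm

lemma sum_erase_empty_pow_card_le_exp_sub_one (α : Type*) [Fintype α] [DecidableEq α] {x : ℝ}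
    (hx : 0 ≤ x) :
    ∑ s ∈ Finset.univ.erase (∅ : Finset α), x ^ #s ≤ Real.exp (Fintype.card α * x) - 1 := by
  simpa [Finset.sum_erase_eq_sub] using sum_pow_card_le_exp α hx

/-- The pairs `(B, C)` over which the union bound runs: `B` is the copy in `Fin n` of the set of
heads, and `C` is the complement of the copy of the set of tails. The condition
`|C| = (k - 1)|B|` is written without subtraction. -/
def admissiblePairs (n k : ℕ) : Finset (Finset (Fin n) × Finset (Fin n)) :=
  {P | P.1.Nonempty ∧ #P.2 + #P.1 = k * #P.1 ∧ k * #P.1 ≤ n}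

variable {a n k : ℕ} {P : Finset (Fin n) × Finset (Fin n)}

lemma mem_admissiblePairs :
    P ∈ admissiblePairs n k ↔ P.1.Nonempty ∧ #P.2 + #P.1 = k * #P.1 ∧ k * #P.1 ≤ n := by
  simp [admissiblePairs]

lemma pos_of_mem_admissiblePairs (hP : P ∈ admissiblePairs n k) : 0 < k := by
  obtain ⟨hB, hC, -⟩ := mem_admissiblePairs.1 hP
  refine Nat.pos_of_ne_zero ?_
  rintro rfl
  have := hB.card_pos
  lia

lemma le_mul_card_compl_of_mem_admissiblePairs (hP : P ∈ admissiblePairs n k) :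
    n ≤ k * #P.2ᶜ := by
  obtain ⟨-, hC, hn⟩ := mem_admissiblePairs.1 hP
  have hk : 1 ≤ k := pos_of_mem_admissiblePairs hP
  have hcard : #P.2 + #P.2ᶜ = n := by simp [Finset.card_add_card_compl]
  nlinarith

lemma sum_admissiblePairs_le (n k : ℕ) :
    ∑ P ∈ admissiblePairs n k, ((n : ℝ)⁻¹ ^ (k + 1)) ^ #P.1 ≤
      (Real.exp (n : ℝ)⁻¹ - 1) * Real.exp 1 := by
  set x : ℝ := (n : ℝ)⁻¹
  have hx : 0 ≤ x := by positivity
  have hweight : ∀ P ∈ admissiblePairs n k, (x ^ (k + 1)) ^ #P.1 = (x ^ 2) ^ #P.1 * x ^ #P.2 := by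
    intro P hP
    obtain ⟨-, hC, -⟩ := mem_admissiblePairs.1 hP
    rw [← pow_mul, ← pow_mul, ← pow_add]
    congr 1
    linarith
  have hsub : admissiblePairs n k ⊆ Finset.univ.erase ∅ ×ˢ Finset.univ := fun P hP => by
    simp [(mem_admissiblePairs.1 hP).1.ne_empty]
  have hheads : ∑ B ∈ Finset.univ.erase (∅ : Finset (Fin n)), (x ^ 2) ^ #B ≤ Real.exp x - 1 := by
    have hnx : (n : ℝ) * x ^ 2 = x := by
      rw [sq, ← mul_assoc, ← inv_inv (n : ℝ)]
      exact inv_mul_mul_self x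
    simpa [hnx] using sum_erase_empty_pow_card_le_exp_sub_one (Fin n) (sq_nonneg x)
  have htails : ∑ C : Finset (Fin n), x ^ #C ≤ Real.exp 1 := by
    refine (sum_pow_card_le_exp (Fin n) hx).trans (Real.exp_le_exp.2 ?_)
    simpa using mul_inv_le_one
  calc ∑ P ∈ admissiblePairs n k, (x ^ (k + 1)) ^ #P.1
      = ∑ P ∈ admissiblePairs n k, (x ^ 2) ^ #P.1 * x ^ #P.2 := Finset.sum_congr rfl hweight
    _ ≤ ∑ P ∈ Finset.univ.erase ∅ ×ˢ Finset.univ, (x ^ 2) ^ #P.1 * x ^ #P.2 :=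
        Finset.sum_le_sum_of_subset_of_nonneg hsub fun _ _ _ => by positivity
    _ = (∑ B ∈ Finset.univ.erase (∅ : Finset (Fin n)), (x ^ 2) ^ #B) *
          ∑ C : Finset (Fin n), x ^ #C := by
        rw [Finset.sum_mul_sum, Finset.sum_product]
    _ ≤ (Real.exp x - 1) * Real.exp 1 := by
        gcongr
        linarith [Real.one_le_exp hx]

/-- The potential arcs selected by `ω` from the copy of `A` in the part `V_v` to the copy of `B`
in the part `V_i`. -/
def selectedArcs (ω : Omega a n) (v i : Fin a) (A B : Finset (Fin n)) :
    Finset (Vtx a n × Vtx a n) :=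
  {e ∈ ({v} ×ˢ A) ×ˢ ({i} ×ˢ B) | ω e = true}

variable {p : ℝ}

lemma measureReal_card_selectedArcs_le (hp : p ∈ Set.Icc 0 1)
    (hpn : Real.log 2 + (k + 1) * Real.log n ≤ n * p / (2 * k)) (v i : Fin a)
    (hP : P ∈ admissiblePairs n k) :
    (model a n p).real {ω | #(selectedArcs ω v i P.2ᶜ P.1) ≤ #P.1} ≤
      ((n : ℝ)⁻¹ ^ (k + 1)) ^ #P.1 := by
  obtain ⟨hB, -, hkB⟩ := mem_admissiblePairs.1 hP
  have hk : 0 < k := pos_of_mem_admissiblePairs hP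
  have hn : 0 < n := (Nat.mul_pos hk hB.card_pos).trans_le hkB
  have hcompl : (n : ℝ) / k ≤ #P.2ᶜ := by
    rw [div_le_iff₀' (by positivity)]
    exact_mod_cast le_mul_card_compl_of_mem_admissiblePairs hP
  -- The tail bound at `t = -log 2`, where `exp t - 1 = -1 / 2`.
  have htail := measureReal_card_filter_le_exp hp
    ((({v} : Finset (Fin a)) ×ˢ P.2ᶜ) ×ˢ (({i} : Finset (Fin a)) ×ˢ P.1)) #P.1
    (neg_nonpos.2 (Real.log_nonneg one_le_two))
  simp only [Nat.cast_le] at htail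
  refine htail.trans ?_
  have hexp : ((n : ℝ)⁻¹ ^ (k + 1)) ^ #P.1 = Real.exp (#P.1 * ((k + 1) * -Real.log n)) := by
    rw [Real.exp_nat_mul, ← Nat.cast_succ, Real.exp_nat_mul, Real.exp_neg,
      Real.exp_log (by positivity)]
  rw [hexp, Real.exp_le_exp, Real.exp_neg, Real.exp_log two_pos]
  have hmean : (#P.1 : ℝ) * (Real.log 2 + (k + 1) * Real.log n) ≤ #P.1 * (#P.2ᶜ * p / 2) := by
    gcongr
    calc Real.log 2 + (k + 1) * Real.log n ≤ n / k * p / 2 := hpn.trans_eq (by ring)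
      _ ≤ #P.2ᶜ * p / 2 := by
        have := hp.1
        gcongr
  simp only [Finset.card_product, Finset.card_singleton, one_mul, Nat.cast_mul]
  linarith

/-- The event that some pair of parts and some admissible pair `(B, C)` violate the required
lower bound on the number of selected arcs from `Cᶜ` to `B`. -/
def sparseEvent (a n k : ℕ) : Set (Omega a n) :=
  {ω | ∃ v i, ∃ P ∈ admissiblePairs n k, #(selectedArcs ω v i P.2ᶜ P.1) ≤ #P.1}

lemma measureReal_sparseEvent_le (hp : p ∈ Set.Icc 0 1)
    (hpn : Real.log 2 + (k + 1) * Real.log n ≤ n * p / (2 * k)) :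
    (model a n p).real (sparseEvent a n k) ≤
      a ^ 2 * ((Real.exp (n : ℝ)⁻¹ - 1) * Real.exp 1) := by
  have := isProbabilityMeasure_model hp a n
  have hunion : sparseEvent a n k = ⋃ I ∈ (Finset.univ : Finset (Fin a × Fin a)) ×ˢ
      admissiblePairs n k, {ω | #(selectedArcs ω I.1.1 I.1.2 I.2.2ᶜ I.2.1) ≤ #I.2.1} := by
    ext ω
    simp [sparseEvent]
  calc (model a n p).real (sparseEvent a n k)
      ≤ ∑ I ∈ (Finset.univ : Finset (Fin a × Fin a)) ×ˢ admissiblePairs n k,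
          ((n : ℝ)⁻¹ ^ (k + 1)) ^ #I.2.1 := by
        rw [hunion]
        refine (measureReal_biUnion_finset_le _ _).trans (Finset.sum_le_sum fun I hI => ?_)
        exact measureReal_card_selectedArcs_le hp hpn _ _ (Finset.mem_product.1 hI).2
    _ = a ^ 2 * ∑ P ∈ admissiblePairs n k, ((n : ℝ)⁻¹ ^ (k + 1)) ^ #P.1 := by
        simp [Finset.sum_product, sq]
    _ ≤ a ^ 2 * ((Real.exp (n : ℝ)⁻¹ - 1) * Real.exp 1) := by
        gcongr
        exact sum_admissiblePairs_le n k

end FirstMoment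

section ArcCount

variable {a n k : ℕ} {v i : Fin a}

lemma exists_eq_singleton_product_of_subset_cellV {A : Set (Vtx a n)} (hA : A ⊆ cellV a n v) :
    ∃ A' : Finset (Fin n), A = (({v} ×ˢ A' : Finset (Vtx a n)) : Set (Vtx a n)) := by
  classical
  refine ⟨Finset.univ.filter fun y => (v, y) ∈ A, Set.ext fun ⟨x, y⟩ => ?_⟩
  have hx : (x, y) ∈ A → x = v := fun h => hA h
  simp only [Finset.coe_product, Set.mem_prod, Finset.coe_singleton, Set.mem_singleton_iff,
    Finset.coe_filter, Finset.mem_univ, true_and, Set.mem_ofPred_eq]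
  constructor
  · exact fun h => ⟨hx h, hx h ▸ h⟩
  · rintro ⟨rfl, h⟩
    exact h

lemma natCard_arcs_eq_card_selectedArcs {D : OrientedGraph (Fin a)} (hD : D.Adj v i)
    (ω : Omega a n) (A B : Finset (Fin n)) :
    Nat.card {e : Vtx a n × Vtx a n // e.1 ∈ (({v} ×ˢ A : Finset (Vtx a n)) : Set (Vtx a n)) ∧
      e.2 ∈ (({i} ×ˢ B : Finset (Vtx a n)) : Set (Vtx a n)) ∧ (Dhat D n ω).Adj e.1 e.2} =
      #(selectedArcs ω v i A B) := by
  rw [← Nat.card_eq_finsetCard]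
  refine Nat.card_congr (Equiv.subtypeEquivRight ?_)
  rintro ⟨⟨x, y⟩, ⟨z, w⟩⟩
  simp only [selectedArcs, Finset.mem_coe, Finset.mem_filter, Finset.mem_product,
    Finset.mem_singleton, Dhat]
  constructor
  · rintro ⟨hx, hz, -, hω⟩
    exact ⟨⟨hx, hz⟩, hω⟩
  · rintro ⟨⟨⟨rfl, hy⟩, rfl, hw⟩, hω⟩
    exact ⟨⟨rfl, hy⟩, ⟨rfl, hw⟩, hD, hω⟩

lemma mem_admissiblePairs_compl (hk : 0 < k) {A B : Finset (Fin n)} (hB : B.Nonempty)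
    (hA : (#A : ℝ) = n - #B * ((k : ℝ) - 1)) (hBn : (#B : ℝ) ≤ (n : ℝ) / k) :
    (B, Aᶜ) ∈ admissiblePairs n k := by
  refine mem_admissiblePairs.2 ⟨hB, ?_, ?_⟩
  · have hcard : (#A : ℝ) + #Aᶜ = n := by
      exact_mod_cast (Finset.card_add_card_compl A).trans (Fintype.card_fin n)
    have : (#Aᶜ : ℝ) + #B = k * #B := by linarith
    exact_mod_cast this
  · rw [le_div_iff₀' (by positivity)] at hBn
    exact_mod_cast hBn

lemma natCard_lt_natCard_arcs_of_notMem_sparseEvent (hk : 0 < k) {D : OrientedGraph (Fin a)}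
    {ω : Omega a n} (hω : ω ∉ sparseEvent a n k) (hD : D.Adj v i) {A B : Set (Vtx a n)}
    (hB : B.Nonempty) (hAv : A ⊆ cellV a n v) (hBi : B ⊆ cellV a n i)
    (hA : (Nat.card A : ℝ) = n - Nat.card B * ((k : ℝ) - 1))
    (hBn : (Nat.card B : ℝ) ≤ (n : ℝ) / k) :
    Nat.card B < Nat.card {e : Vtx a n × Vtx a n //
      e.1 ∈ A ∧ e.2 ∈ B ∧ (Dhat D n ω).Adj e.1 e.2} := by
  obtain ⟨A, rfl⟩ := exists_eq_singleton_product_of_subset_cellV hAv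
  obtain ⟨B, rfl⟩ := exists_eq_singleton_product_of_subset_cellV hBi
  have hcard (j : Fin a) (S : Finset (Fin n)) :
      Nat.card (({j} ×ˢ S : Finset (Vtx a n)) : Set (Vtx a n)) = #S := by
    rw [Nat.card_coe_set_eq, Set.ncard_coe_finset, Finset.card_product, Finset.card_singleton,
      one_mul]
  rw [hcard] at hA hBn ⊢
  rw [hcard] at hA
  rw [natCard_arcs_eq_card_selectedArcs hD]
  have hadm : (B, Aᶜ) ∈ admissiblePairs n k :=
    mem_admissiblePairs_compl hk (Finset.nonempty_product.1 (Finset.coe_nonempty.1 hB)).2 hA hBn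
  by_contra! hfew
  exact hω ⟨v, i, _, hadm, by rwa [compl_compl]⟩

end ArcCount

section Limits

lemma tendsto_measure_one_of_compl_subset {ι : Type*} {l : Filter ι} {Ω : ι → Type*}
    [∀ i, MeasurableSpace (Ω i)] {μ : ∀ i, Measure (Ω i)}
    (hμ : ∀ᶠ i in l, IsProbabilityMeasure (μ i)) {s t : ∀ i, Set (Ω i)}
    (hst : ∀ i, (s i)ᶜ ⊆ t i) (ht : Filter.Tendsto (fun i => (μ i).real (t i)) l (𝓝 0)) :
    Filter.Tendsto (fun i => μ i (s i)) l (𝓝 1) := by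
  have hlower : Filter.Tendsto (fun i => ENNReal.ofReal (1 - (μ i).real (t i))) l (𝓝 1) := by
    simpa using ENNReal.tendsto_ofReal (ht.const_sub 1)
  refine tendsto_of_tendsto_of_tendsto_of_le_of_le' hlower tendsto_const_nhds ?_ ?_
  · filter_upwards [hμ] with i _
    rw [ENNReal.ofReal_le_iff_le_toReal (measure_ne_top _ _), sub_le_iff_le_add]
    calc (1 : ℝ) = (μ i).real (s i ∪ t i) := by
          rw [Set.compl_subset_iff_union.1 (hst i), probReal_univ]
      _ ≤ (μ i).real (s i) + (μ i).real (t i) := measureReal_union_le _ _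
  · exact hμ.mono fun i _ => prob_le_one

lemma tendsto_measure_one_mono {ι : Type*} {l : Filter ι} {Ω : ι → Type*}
    [∀ i, MeasurableSpace (Ω i)] {μ : ∀ i, Measure (Ω i)}
    (hμ : ∀ᶠ i in l, IsProbabilityMeasure (μ i)) {s t : ∀ i, Set (Ω i)}
    (hst : ∀ i, s i ⊆ t i) (hs : Filter.Tendsto (fun i => μ i (s i)) l (𝓝 1)) :
    Filter.Tendsto (fun i => μ i (t i)) l (𝓝 1) :=
  tendsto_of_tendsto_of_tendsto_of_le_of_le' hs tendsto_const_nhds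
    (.of_forall fun i => measure_mono (hst i)) (hμ.mono fun _ _ => prob_le_one)

variable {p : ℕ → ℝ}

lemma eventually_log_le_mul_of_isLittleO (hp : ∀ᶠ n in Filter.atTop, 0 ≤ p n)
    (hlog : (fun n : ℕ => Real.log n) =o[Filter.atTop] fun n => n * p n) (b c : ℝ) {d : ℝ}
    (hd : 0 < d) :
    ∀ᶠ n : ℕ in Filter.atTop, b + c * Real.log n ≤ n * p n / d := by
  have hconst : (fun _ : ℕ => b) =o[Filter.atTop] fun n : ℕ => Real.log n :=
    Real.isLittleO_const_log_atTop.comp_tendsto tendsto_natCast_atTop_atTop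
  have hsum := (hconst.trans hlog).add (hlog.const_mul_left c)
  filter_upwards [hp, hsum.bound (inv_pos.2 hd)] with n hpn hn
  rw [Real.norm_of_nonneg (by positivity : 0 ≤ n * p n), inv_mul_eq_div] at hn
  exact (Real.le_norm_self _).trans hn

lemma tendsto_measureReal_sparseEvent (a : ℕ) {k : ℕ} (hk : 0 < k)
    (hp : ∀ᶠ n in Filter.atTop, p n ∈ Set.Icc 0 1)
    (hlog : (fun n : ℕ => Real.log n) =o[Filter.atTop] fun n => n * p n) :
    Filter.Tendsto (fun n => (model a n (p n)).real (sparseEvent a n k)) Filter.atTop (𝓝 0) := by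
  have hbound : Filter.Tendsto
      (fun n : ℕ => (a : ℝ) ^ 2 * ((Real.exp (n : ℝ)⁻¹ - 1) * Real.exp 1)) Filter.atTop (𝓝 0) := by
    have hexp := (Real.continuous_exp.tendsto 0).comp
      (tendsto_inv_atTop_nhds_zero_nat (𝕜 := ℝ))
    simpa using ((hexp.sub_const 1).mul_const (Real.exp 1)).const_mul ((a : ℝ) ^ 2)
  refine squeeze_zero' (.of_forall fun _ => measureReal_nonneg) ?_ hbound
  have hgrowth := eventually_log_le_mul_of_isLittleO (hp.mono fun _ h => h.1) hlog (Real.log 2)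
    (k + 1) (d := 2 * k) (by positivity)
  filter_upwards [hp, hgrowth] with n hpn hn
  exact measureReal_sparseEvent_le hpn hn

end Limits

section PowerProbability

variable {ε : ℝ}

lemma natCast_rpow_sub_one_mem_Icc (hε : ε ≤ 1) {n : ℕ} (hn : 0 < n) :
    (n : ℝ) ^ (ε - 1) ∈ Set.Icc 0 1 :=
  ⟨by positivity,
    Real.rpow_le_one_of_one_le_of_nonpos (mod_cast hn) (sub_nonpos.2 hε)⟩

lemma isLittleO_log_natCast_mul_rpow_sub_one (hε : 0 < ε) :
    (fun n : ℕ => Real.log n) =o[Filter.atTop] fun n : ℕ => (n : ℝ) * (n : ℝ) ^ (ε - 1) := by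
  refine ((isLittleO_log_rpow_atTop hε).comp_tendsto tendsto_natCast_atTop_atTop).congr'
    .rfl ?_
  filter_upwards [Filter.eventually_gt_atTop 0] with n hn
  have hn : (n : ℝ) ≠ 0 := by positivity
  simp only [Function.comp_apply, Real.rpow_sub_one hn, mul_div_cancel₀ _ hn]

end PowerProbability

theorem aas_arcs_into_small_sets_general (a : ℕ) (D : OrientedGraph (Fin a)) (k : ℕ)
    (hk : 0 < k) (p : ℕ → ℝ) (hp : ∀ᶠ n in Filter.atTop, p n ∈ Set.Icc 0 1)
    (hlog : (fun n : ℕ => Real.log n) =o[Filter.atTop] fun n => n * p n) :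
    Filter.Tendsto
      (fun n : ℕ => model a n (p n)
        {ω : Omega a n | ∀ v i₀ : Fin a, D.Adj v i₀ →
          ∀ A B : Set (Vtx a n), B.Nonempty →
            A ⊆ cellV a n v → B ⊆ cellV a n i₀ →
            (Nat.card A : ℝ) = n - Nat.card B * ((k : ℝ) - 1) →
            (Nat.card B : ℝ) ≤ (n : ℝ) / k →
            Nat.card B < Nat.card {e : Vtx a n × Vtx a n //
              e.1 ∈ A ∧ e.2 ∈ B ∧ (Dhat D n ω).Adj e.1 e.2}})
      Filter.atTop (𝓝 1) := by
  refine tendsto_measure_one_of_compl_subset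
    (hp.mono fun n hpn => isProbabilityMeasure_model hpn a n) (fun n => Set.compl_subset_comm.1 ?_)
    (tendsto_measureReal_sparseEvent a hk hp hlog)
  intro ω hω v i₀ hD A B hB hAv hBi hA hBn
  exact natCard_lt_natCard_arcs_of_notMem_sparseEvent hk hω hD hB hAv hBi hA hBn

/-- **Lemma 7.** With `0 < ε < 1/(4ℓ)` and `p = n^(ε−1)`, the probability that a random
oriented graph `D̂` drawn from `𝒟(n, p)` has the following property tends to `1` as
`n → ∞`: for every arc `v → i₀` of `D` and all nonempty sets `A ⊆ V_v` and `B ⊆ V_{i₀}`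
with `|A| = n − |B|(k − 1)` and `|B| ≤ n/k`, the number of arcs of `D̂` from `A` to `B`
is strictly greater than `min {|B|, n^(εℓ)}`. -/
theorem aas_arcs_into_small_sets (a : ℕ) (D : OrientedGraph (Fin a)) (k ℓ : ℕ)
    (hk : 0 < k) (hℓ : 0 < ℓ) (ε : ℝ) (hε0 : 0 < ε) (hε : ε < 1 / (4 * ℓ)) :
    Filter.Tendsto
      (fun n : ℕ => model a n ((n : ℝ) ^ (ε - 1))
        {ω : Omega a n | ∀ v i₀ : Fin a, D.Adj v i₀ →
          ∀ A B : Set (Vtx a n), A.Nonempty → B.Nonempty →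
            A ⊆ cellV a n v → B ⊆ cellV a n i₀ →
            (Nat.card A : ℝ) = n - Nat.card B * ((k : ℝ) - 1) →
            (Nat.card B : ℝ) ≤ (n : ℝ) / k →
            min (Nat.card B : ℝ) ((n : ℝ) ^ (ε * (ℓ : ℝ))) <
              (Nat.card {p : Vtx a n × Vtx a n //
                p.1 ∈ A ∧ p.2 ∈ B ∧ (Dhat D n ω).Adj p.1 p.2} : ℝ)})
      Filter.atTop (nhds 1) := by
  have hε1 : ε ≤ 1 := hε.le.trans (div_le_one_of_le₀ (by norm_cast; lia) (by positivity))
  have hp := (Filter.eventually_gt_atTop 0).mono fun n => natCast_rpow_sub_one_mem_Icc hε1 (n := n)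
  refine tendsto_measure_one_mono (hp.mono fun n hpn => isProbabilityMeasure_model hpn a n) ?_
    (aas_arcs_into_small_sets_general a D k hk _ hp (isLittleO_log_natCast_mul_rpow_sub_one hε0))
  intro n ω hω v i₀ hD A B _ hB hAv hBi hA hBn
  exact min_lt_of_left_lt (mod_cast hω v i₀ hD A B hB hAv hBi hA hBn)
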